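/- Let θ ∈ [0,1] and w > 0 satisfy w/2 ≤ min(θ, 1 − θ). Define φ : [0,1] → [0,1] by φ(u) = min(1, max(0, (θ − u)/w + 1/2)). Then the pushforward of the uniform (Lebesgue) probability measure on [0,1] under φ equals (θ − w/2)·δ₁ + (1 − θ − w/2)·δ₀ + w·λ, where δ₀, δ₁ are Dirac measures at 0 and 1 and λ is the uniform probability measure on [0,1]. In particular, ℙ(φ(U) = 1) = θ − w/2, ℙ(φ(U) = 0) = 1 − θ − w/2, ℙ(φ(U) ∈ (0,1)) = w, and conditional on φ(U) ∈ (0,1), φ(U) is uniformly distributed on (0,1). -/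

import Mathlib

open MeasureTheory
open scoped ENNReal

/-!
Two finite measures on `ℝ` agree once they agree on every ray `Iic t`. For `0 ≤ t < 1` the event
`φ u ≤ t` unclamps to `θ + w / 2 - w * t ≤ u`; the window condition keeps this threshold inside
`[0,1]`, so the event has probability `(1 - θ - w / 2) + w * t`, which is the mass the mixture
puts on `Iic t`. Rays with `t < 0` have mass `0` and rays with `1 ≤ t` have full mass. The
remaining claims are evaluations of the mixture.
-/

/-- **Correctness of the UGS sampling step (Algorithm 1, Equation (eqn-half-ugs)).**
For `θ ∈ [0,1]` and a window `w > 0` with `w/2 ≤ min θ (1 − θ)`, the clamped map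
`φ u = clamp ((θ − u)/w + 1/2)` pushes the uniform measure on `[0,1]` forward to the mixture
`(θ − w/2) δ₁ + (1 − θ − w/2) δ₀ + w ⋅ Unif[0,1]`; in particular `φ(U) = 1` with probability
`θ − w/2`, `φ(U) = 0` with probability `1 − θ − w/2`, `φ(U) ∈ (0,1)` with probability `w`,
and conditionally on `φ(U) ∈ (0,1)` the value `φ(U)` is uniform on `(0,1)`. -/
theorem ugs_sampling_step
    (θ w : ℝ) (hθ : θ ∈ Set.Icc (0 : ℝ) 1) (hw : 0 < w)
    (hwin : w / 2 ≤ min θ (1 - θ))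
    (φ : ℝ → ℝ) (hφ : φ = fun u => min 1 (max 0 ((θ - u) / w + 1 / 2)))
    (μ : Measure ℝ) (hμ : μ = volume.restrict (Set.Icc (0 : ℝ) 1)) :
    Measure.map φ μ
        = ENNReal.ofReal (θ - w / 2) • Measure.dirac (1 : ℝ)
          + ENNReal.ofReal (1 - θ - w / 2) • Measure.dirac (0 : ℝ)
          + ENNReal.ofReal w • μ
      ∧ Measure.map φ μ {1} = ENNReal.ofReal (θ - w / 2)
      ∧ Measure.map φ μ {0} = ENNReal.ofReal (1 - θ - w / 2)
      ∧ Measure.map φ μ (Set.Ioo (0 : ℝ) 1) = ENNReal.ofReal w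
      ∧ ∀ s : Set ℝ, MeasurableSet s →
          Measure.map φ μ (s ∩ Set.Ioo (0 : ℝ) 1)
            = ENNReal.ofReal w * volume (s ∩ Set.Ioo (0 : ℝ) 1) := by
  obtain ⟨hθ0, hθ1⟩ := hθ
  have ha : 0 ≤ θ - w / 2 := by linarith [hwin.trans (min_le_left _ _)]
  have hb : 0 ≤ 1 - θ - w / 2 := by linarith [hwin.trans (min_le_right _ _)]
  have hmeas : Measurable φ := by rw [hφ]; fun_prop
  have : IsFiniteMeasure μ := by rw [hμ]; infer_instance
  have key : Measure.map φ μ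
        = ENNReal.ofReal (θ - w / 2) • Measure.dirac (1 : ℝ)
          + ENNReal.ofReal (1 - θ - w / 2) • Measure.dirac (0 : ℝ)
          + ENNReal.ofReal w • μ := by
    refine Measure.ext_of_Iic _ _ fun t => ?_
    rw [Measure.map_apply hmeas measurableSet_Iic, Measure.add_apply, Measure.add_apply,
      Measure.smul_apply, Measure.smul_apply, Measure.smul_apply,
      Measure.dirac_apply' _ measurableSet_Iic, Measure.dirac_apply' _ measurableSet_Iic, hμ,
      Measure.restrict_apply (hmeas measurableSet_Iic),
      Measure.restrict_apply measurableSet_Iic]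
    simp only [smul_eq_mul]
    rcases lt_or_ge t 0 with ht | ht
    · have h1 : φ ⁻¹' Set.Iic t ∩ Set.Icc 0 1 = ∅ := by
        ext u
        simp [hφ, ht, ht.trans zero_lt_one]
      have h2 : Set.Iic t ∩ Set.Icc (0 : ℝ) 1 = ∅ := by
        ext u
        simp only [Set.mem_inter_iff, Set.mem_Iic, Set.mem_Icc, Set.mem_empty_iff_false, iff_false]
        intro h
        linarith [h.1, h.2.1]
      simp [h1, h2, ht, ht.trans zero_lt_one]
    rcases lt_or_ge t 1 with ht1 | ht1
    · have h1 : φ ⁻¹' Set.Iic t ∩ Set.Icc 0 1 = Set.Icc (θ + w / 2 - w * t) 1 := by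
        ext u
        have h : (θ - u) / w + 1 / 2 ≤ t ↔ θ + w / 2 - w * t ≤ u := by
          rw [← le_sub_iff_add_le, div_le_iff₀ hw]
          constructor <;> intro h <;> linarith
        have h0 : 0 ≤ θ + w / 2 - w * t := by nlinarith
        simp only [hφ, Set.mem_inter_iff, Set.mem_preimage, Set.mem_Iic, Set.mem_Icc,
          min_le_iff, max_le_iff, h]
        constructor
        · rintro ⟨h | h, h'⟩
          · linarith
          · exact ⟨h.2, h'.2⟩
        · exact fun h => ⟨Or.inr ⟨ht, h.1⟩, h0.trans h.1, h.2⟩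
      have h2 : Set.Iic t ∩ Set.Icc (0 : ℝ) 1 = Set.Icc 0 t := by
        ext u
        simp only [Set.mem_inter_iff, Set.mem_Iic, Set.mem_Icc]
        constructor
        · exact fun h => ⟨h.2.1, h.1⟩
        · exact fun h => ⟨h.2, h.1, h.2.trans ht1.le⟩
      rw [h1, h2, Real.volume_Icc, Real.volume_Icc, ← ENNReal.ofReal_mul hw.le,
        Set.indicator_of_notMem (by simpa using ht1), Set.indicator_of_mem (by simpa using ht),
        Pi.one_apply, mul_zero, mul_one, zero_add,
        ← ENNReal.ofReal_add hb (by nlinarith)]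
      congr 1
      ring
    · have h1 : φ ⁻¹' Set.Iic t ∩ Set.Icc 0 1 = Set.Icc 0 1 := by
        refine Set.inter_eq_right.2 fun u _ => ?_
        simp [hφ, ht1]
      have h2 : Set.Iic t ∩ Set.Icc (0 : ℝ) 1 = Set.Icc 0 1 :=
        Set.inter_eq_right.2 fun u hu => hu.2.trans ht1
      rw [h1, h2, Real.volume_Icc, sub_zero, ENNReal.ofReal_one,
        Set.indicator_of_mem (by simpa using ht1), Set.indicator_of_mem (by simpa using ht),
        Pi.one_apply, Pi.one_apply, mul_one, mul_one, mul_one, ← ENNReal.ofReal_add ha hb,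
        ← ENNReal.ofReal_add (by linarith) hw.le, ← ENNReal.ofReal_one]
      congr 1
      ring
  have hsec : ∀ s : Set ℝ, MeasurableSet s →
      Measure.map φ μ (s ∩ Set.Ioo (0 : ℝ) 1)
        = ENNReal.ofReal w * volume (s ∩ Set.Ioo (0 : ℝ) 1) := by
    intro s hs
    have hm := hs.inter (measurableSet_Ioo (a := (0 : ℝ)) (b := 1))
    have h : s ∩ Set.Ioo (0 : ℝ) 1 ∩ Set.Icc 0 1 = s ∩ Set.Ioo (0 : ℝ) 1 :=
      Set.inter_eq_left.2 fun u hu => Set.Ioo_subset_Icc_self hu.2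
    rw [key, hμ]
    simp [Measure.dirac_apply' _ hm, Measure.restrict_apply hm, h]
  refine ⟨key, ?_, ?_, ?_, hsec⟩
  · rw [key, hμ]
    simp
  · rw [key, hμ]
    simp
  · simpa using hsec Set.univ MeasurableSet.univ
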